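/- Let u_{1,0}, u_{2,0}, y_{1,0}, y_{2,0} be nonnegative bounded functions on ℝ, and let M = max_{i=1,2} ‖u_{i,0}‖_∞, α = max_{i=1,2} A_i b_i ‖y_{i,0}‖_∞ / a_i, β = max_{i=1,2} d_i/(A_i b_i), and φ(t) = (M+β)e^{αt} − β. Then for i = 1,2, every t ≥ 0 and every y with 0 ≤ y ≤ ‖y_{i,0}‖_∞, one has φ'(t) ≥ f̃_i(y, φ(t), φ(t)); that is, the pair (φ,φ) is an upper solution, and (0,0) is a (lower) solution since f̃_i(y,0,0) = 0, of the system (w_i)_t − α_i(y_i)(w_i)_{xx} + β_i(y_i)(w_i)_x = f̃_i(y_i, w_1, w_2) whenever 0 ≤ y_i ≤ ‖y_{i,0}‖_∞. -/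

import Mathlib

/-!
Writing `φ(t) = (M + β) e^{αt} - β`, one has `φ' = α (φ + β)` with `φ + β ≥ 0`. On the diagonal
`u₁ = u₂` the exchange term of the reaction vanishes, and since `d ≤ A b β` and `0 ≤ f̃ ≤ 1`, the
remaining term is at most `A b (φ + β) y / (a + b y) ≤ (A b ‖y₀‖_∞ / a) (φ + β) ≤ α (φ + β)`. This
bound is `fitil_diag_le`; the derivative is `deriv_phiUp`.
-/

open MeasureTheory

noncomputable section

/-- The modified Arrhenius function: `f̃(s) = exp(-E/s)` for `s > 0`, `f̃(s) = 0` for `s ≤ 0`. -/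
def ftil (E s : ℝ) : ℝ := if 0 < s then Real.exp (-(E / s)) else 0

/-- Partial derivative in time of `u = u(x,t)`. -/
def pdT (u : ℝ → ℝ → ℝ) (x t : ℝ) : ℝ := deriv (fun s => u x s) t

/-- Partial derivative in space of `u = u(x,t)`. -/
def pdX (u : ℝ → ℝ → ℝ) (x t : ℝ) : ℝ := deriv (fun y => u y t) x

/-- Second partial derivative in space of `u = u(x,t)`. -/
def pdXX (u : ℝ → ℝ → ℝ) (x t : ℝ) : ℝ := deriv (fun y => pdX u y t) x

/-- The class `C^{α,α/2}(S)`: bounded functions, Hölder continuous with exponent `α` in `x`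
and `α/2` in `t` on `S`. -/
def HolderClass (S : Set (ℝ × ℝ)) (α : ℝ) (u : ℝ → ℝ → ℝ) : Prop :=
  ∃ C : ℝ, (∀ p ∈ S, |u p.1 p.2| ≤ C) ∧
    ∀ p ∈ S, ∀ q ∈ S,
      |u p.1 p.2 - u q.1 q.2| ≤ C * (|p.1 - q.1| ^ α + |p.2 - q.2| ^ (α / 2))

/-- The class `C^{2,1}(S)`: twice continuously differentiable in `x`, once in `t`, on `S`. -/
def C21 (S : Set (ℝ × ℝ)) (u : ℝ → ℝ → ℝ) : Prop :=
  (∀ p ∈ S,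
      DifferentiableAt ℝ (fun y => u y p.2) p.1 ∧
      DifferentiableAt ℝ (fun y => pdX u y p.2) p.1 ∧
      DifferentiableAt ℝ (fun s => u p.1 s) p.2) ∧
  ContinuousOn (fun p : ℝ × ℝ => u p.1 p.2) S ∧
  ContinuousOn (fun p : ℝ × ℝ => pdX u p.1 p.2) S ∧
  ContinuousOn (fun p : ℝ × ℝ => pdXX u p.1 p.2) S ∧
  ContinuousOn (fun p : ℝ × ℝ => pdT u p.1 p.2) S

/-- The sup norm `‖g‖_∞` of a function on `ℝ`. -/
def supAbs (g : ℝ → ℝ) : ℝ := ⨆ x, |g x|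

/-- The fuel concentration `y_i` determined from the temperature:
`y(x,t) = y₀(x)·exp(-A ∫₀ᵗ f̃(w(x,s)) ds)`. -/
def yfun (E A : ℝ) (y0 : ℝ → ℝ) (w : ℝ → ℝ → ℝ) (x t : ℝ) : ℝ :=
  y0 x * Real.exp (-A * ∫ s in (0:ℝ)..t, ftil E (w x s))

/-- The reaction function
`f̃ᵢ(y,u₁,u₂) = ((bᵢAᵢuᵢ + dᵢ)·y·f̃(uᵢ) + (-1)^i q (u₁ - u₂)) / (aᵢ + bᵢ y)`,
where `ui` denotes the `i`-th component and `sgn = (-1)^i`. -/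
def fitil (E q bi Ai di ai sgn y ui u1 u2 : ℝ) : ℝ :=
  ((bi * Ai * ui + di) * y * ftil E ui + sgn * q * (u1 - u2)) / (ai + bi * y)

/-- The upper solution `φ(t) = (M+β)e^{αt} - β` with
`M = max ‖u_{i,0}‖_∞`, `α = max A_i b_i ‖y_{i,0}‖_∞ / a_i`, `β = max d_i/(A_i b_i)`. -/
def phiUp (a b d A : Fin 2 → ℝ) (u0 y0 : Fin 2 → ℝ → ℝ) (t : ℝ) : ℝ :=
  (max (supAbs (u0 0)) (supAbs (u0 1)) + max (d 0 / (A 0 * b 0)) (d 1 / (A 1 * b 1))) *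
      Real.exp (max (A 0 * b 0 * supAbs (y0 0) / a 0) (A 1 * b 1 * supAbs (y0 1) / a 1) * t) -
    max (d 0 / (A 0 * b 0)) (d 1 / (A 1 * b 1))

/-- `u = (u₁,u₂)` is a solution of the Cauchy problem on `ℝ × [0,T]` in the class
`C^{2,1}(ℝ×(0,T]) ∩ C^{1,1/2}(ℝ×[0,T])`, lying in the sector `⟨0,φ⟩_T`. -/
def IsSol (E q : ℝ) (lam a b c d A : Fin 2 → ℝ) (u0 y0 : Fin 2 → ℝ → ℝ)
    (T : ℝ) (u : Fin 2 → ℝ → ℝ → ℝ) : Prop :=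
  (∀ i, C21 {p : ℝ × ℝ | 0 < p.2 ∧ p.2 ≤ T} (u i)) ∧
  (∀ i, HolderClass {p : ℝ × ℝ | 0 ≤ p.2 ∧ p.2 ≤ T} 1 (u i)) ∧
  (∀ i x, u i x 0 = u0 i x) ∧
  (∀ i x t, 0 < t → t ≤ T →
      pdT (u i) x t
        - lam i / (a i + b i * yfun E (A i) (y0 i) (u i) x t) * pdXX (u i) x t
        + c i / (a i + b i * yfun E (A i) (y0 i) (u i) x t) * pdX (u i) x t
      = fitil E q (b i) (A i) (d i) (a i) ((-1 : ℝ) ^ ((i : ℕ) + 1))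
          (yfun E (A i) (y0 i) (u i) x t) (u i x t) (u 0 x t) (u 1 x t)) ∧
  (∀ i x t, 0 ≤ t → t ≤ T → 0 ≤ u i x t ∧ u i x t ≤ phiUp a b d A u0 y0 t)

end

theorem ftil_nonneg (E s : ℝ) : 0 ≤ ftil E s := by
  unfold ftil
  split_ifs
  · positivity
  · exact le_rfl

theorem ftil_le_one {E : ℝ} (hE : 0 < E) (s : ℝ) : ftil E s ≤ 1 := by
  unfold ftil
  split_ifs with hs
  · exact Real.exp_le_one_iff.mpr (neg_nonpos.mpr (by positivity))
  · exact zero_le_one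

/-- The reaction term on the diagonal is at most `α (φ + β)`, for any `β ≥ d / (A b)` and
`α ≥ A b S / a`, where `S` bounds the concentration `y`. -/
theorem fitil_diag_le {E q b A d a sgn y φ S α β : ℝ} (hE : 0 < E) (ha : 0 < a) (hb : 0 < b)
    (hA : 0 < A) (hy : 0 ≤ y) (hyS : y ≤ S) (hβ : d / (A * b) ≤ β) (hα : A * b * S / a ≤ α)
    (hφ : 0 ≤ φ + β) :
    fitil E q b A d a sgn y φ φ φ ≤ α * (φ + β) := by
  have hdβ : d ≤ β * (A * b) := (div_le_iff₀ (by positivity)).mp hβ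
  have hSα : A * b * S ≤ α * a := (div_le_iff₀ ha).mp hα
  have hf0 := ftil_nonneg E φ
  have hf1 := ftil_le_one hE φ
  have hα0 : 0 ≤ α := le_trans (by have := hy.trans hyS; positivity) hα
  unfold fitil
  rw [sub_self, mul_zero, add_zero, div_le_iff₀ (by positivity)]
  calc (b * A * φ + d) * y * ftil E φ
      ≤ (A * b * (φ + β)) * y * ftil E φ := by
        gcongr
        linarith
    _ ≤ (A * b * (φ + β)) * y * 1 := by gcongr
    _ ≤ (A * b * (φ + β)) * S * 1 := by gcongr
    _ = A * b * S * (φ + β) := by ring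
    _ ≤ α * a * (φ + β) := by gcongr
    _ = α * (φ + β) * a := by ring
    _ ≤ α * (φ + β) * (a + b * y) := by
        gcongr
        exact le_add_of_nonneg_right (by positivity)

/-- `φ` solves the linear equation `φ' = α (φ + β)`. -/
theorem deriv_phiUp (a b d A : Fin 2 → ℝ) (u0 y0 : Fin 2 → ℝ → ℝ) (t : ℝ) :
    deriv (phiUp a b d A u0 y0) t =
      max (A 0 * b 0 * supAbs (y0 0) / a 0) (A 1 * b 1 * supAbs (y0 1) / a 1) *
        (phiUp a b d A u0 y0 t + max (d 0 / (A 0 * b 0)) (d 1 / (A 1 * b 1))) := by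
  unfold phiUp
  generalize max (A 0 * b 0 * supAbs (y0 0) / a 0) (A 1 * b 1 * supAbs (y0 1) / a 1) = α
  generalize max (d 0 / (A 0 * b 0)) (d 1 / (A 1 * b 1)) = β
  generalize max (supAbs (u0 0)) (supAbs (u0 1)) = M
  have h : HasDerivAt (fun t => (M + β) * Real.exp (α * t) - β)
      ((M + β) * (Real.exp (α * t) * (α * 1))) t :=
    ((((hasDerivAt_id t).const_mul α).exp).const_mul (M + β)).sub_const β
  rw [h.deriv]
  ring

theorem phiUp_add_nonneg (a b d A : Fin 2 → ℝ) (hb : ∀ i, 0 < b i) (hd : ∀ i, 0 < d i)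
    (hA : ∀ i, 0 < A i) (u0 y0 : Fin 2 → ℝ → ℝ) (t : ℝ) :
    0 ≤ phiUp a b d A u0 y0 t + max (d 0 / (A 0 * b 0)) (d 1 / (A 1 * b 1)) := by
  have hM : 0 ≤ max (supAbs (u0 0)) (supAbs (u0 1)) :=
    le_max_of_le_left (Real.iSup_nonneg fun _ => abs_nonneg _)
  have hβ : 0 ≤ max (d 0 / (A 0 * b 0)) (d 1 / (A 1 * b 1)) :=
    le_max_of_le_left (div_pos (hd 0) (mul_pos (hA 0) (hb 0))).le
  unfold phiUp
  rw [sub_add_cancel]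
  exact mul_nonneg (add_nonneg hM hβ) (Real.exp_pos _).le

/-- `(φ,φ)` is an upper solution (`φ'(t) ≥ f̃ᵢ(y,φ(t),φ(t))` for
`0 ≤ y ≤ ‖y_{i,0}‖_∞`) and `(0,0)` is a (lower) solution (`f̃ᵢ(y,0,0) = 0`) of the
reaction–diffusion system. -/
theorem upper_and_lower_solutions
    (E q : ℝ) (lam a b c d A : Fin 2 → ℝ)
    (hE : 0 < E) (hq : 0 < q)
    (hlam : ∀ i, 0 < lam i) (ha : ∀ i, 0 < a i) (hb : ∀ i, 0 < b i)
    (hc : ∀ i, 0 < c i) (hd : ∀ i, 0 < d i) (hA : ∀ i, 0 < A i)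
    (u0 y0 : Fin 2 → ℝ → ℝ)
    (hu0nonneg : ∀ i x, 0 ≤ u0 i x) (hy0nonneg : ∀ i x, 0 ≤ y0 i x)
    (hu0bdd : ∀ i, ∃ C, ∀ x, |u0 i x| ≤ C)
    (hy0bdd : ∀ i, ∃ C, ∀ x, |y0 i x| ≤ C) :
    ∀ i : Fin 2,
      (∀ t y : ℝ, 0 ≤ t → 0 ≤ y → y ≤ supAbs (y0 i) →
        fitil E q (b i) (A i) (d i) (a i) ((-1 : ℝ) ^ ((i : ℕ) + 1)) y
            (phiUp a b d A u0 y0 t) (phiUp a b d A u0 y0 t) (phiUp a b d A u0 y0 t)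
          ≤ deriv (phiUp a b d A u0 y0) t) ∧
      (∀ y : ℝ, 0 ≤ y → y ≤ supAbs (y0 i) →
        fitil E q (b i) (A i) (d i) (a i) ((-1 : ℝ) ^ ((i : ℕ) + 1)) y 0 0 0 = 0) := by
  intro i
  refine ⟨fun t y _ hy hyS => ?_, fun y _ _ => by simp [fitil, ftil]⟩
  rw [deriv_phiUp]
  refine fitil_diag_le hE (ha i) (hb i) (hA i) hy hyS ?_ ?_
    (phiUp_add_nonneg a b d A hb hd hA u0 y0 t)
  · fin_cases i
    · exact le_max_left _ _
    · exact le_max_right _ _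
  · fin_cases i
    · exact le_max_left _ _
    · exact le_max_right _ _
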